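/- Let n ≥ 1 and s ∈ (0,1). Let Ω ⊂ ℝⁿ be a bounded open set, and let u : ℝⁿ → ℝ be a smooth function with compact support contained in Ω, u not identically 0. Let w_u(x,y) = ∫_{ℝⁿ} y^{2s} u(ξ)(|x-ξ|²+y²)^{-(n+2s)/2} dξ be its Caffarelli–Silvestre extension. Then ∫₀^∞ ∫_{ℝⁿ \setminus Ω} y^{1-2s} |∇w_u(x,y)|² dx dy > 0; consequently the energy of w_u over the half-cylinder Ω × (0,∞) is strictly smaller than its energy over the full half-space ℝⁿ × (0,∞). -/

import Mathlib

open MeasureTheory Real Filter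
open scoped ENNReal

/-! If `∂_y w` vanished on `U × (0, ∞)` for a nonempty open `U`, then `w` would be constant along
the vertical lines over `U`, hence zero there by decay as `y → ∞`. At each fixed height `w(·, y)` is
real analytic along lines, so it would vanish on the whole space, and so would its trace as `y → 0`,
a positive multiple of `u`. Thus every cylinder over a nonempty open set carries positive energy.

Strictness also needs the energy over `Ω × (0, ∞)` to be finite. A displacement of size `δ` at
height `y` changes the kernel by a factor `1 + O(δ / y)`, and its mass is the same at every point,
so testing against `u - u(x)` gives `|∇w| ≤ A y^(b-1)` for `u` Hölder of exponent `b < 2s`.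
-/

theorem nonempty_interior_compl_of_isBounded {E : Type*} [NormedAddCommGroup E] [NormedSpace ℝ E]
    [Nontrivial E] {S : Set E} (hS : Bornology.IsBounded S) : (interior Sᶜ).Nonempty := by
  rw [interior_compl, Set.nonempty_compl]
  exact fun h => NormedSpace.unbounded_univ ℝ E (h ▸ hS.closure)

section ParametricIntegral

variable {X : Type*} [TopologicalSpace X] [MeasurableSpace X] [OpensMeasurableSpace X]

theorem hasDerivAt_integral_smul_of_hasCompactSupport {𝕜 : Type*} [RCLike 𝕜] {μ : Measure X}
    [IsFiniteMeasureOnCompacts μ] {u : X → ℝ} (hu : Continuous u) (hc : HasCompactSupport u)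
    {S : Set 𝕜} (hS : IsOpen S) {F F' : 𝕜 → X → 𝕜} (hF : ∀ z ∈ S, Continuous (F z))
    (hF' : ContinuousOn (fun p : 𝕜 × X => F' p.1 p.2) (S ×ˢ Set.univ))
    (hd : ∀ z ∈ S, ∀ ξ, HasDerivAt (fun z => F z ξ) (F' z ξ) z) {z : 𝕜} (hz : z ∈ S) :
    HasDerivAt (fun z => ∫ ξ, u ξ • F z ξ ∂μ) (∫ ξ, u ξ • F' z ξ ∂μ) z := by
  obtain ⟨ε, hε, hball⟩ := Metric.nhds_basis_closedBall.mem_iff.1 (hS.mem_nhds hz)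
  obtain ⟨C, hC⟩ := ((isCompact_closedBall z ε).prod hc).exists_bound_of_continuousOn
    (hF'.mono (Set.prod_mono hball (Set.subset_univ _)))
  have hint : ∀ w ∈ S, Integrable (fun ξ => u ξ • F w ξ) μ := fun w hw =>
    (hu.smul (hF w hw)).integrable_of_hasCompactSupport hc.smul_right
  have hF'z : Continuous (F' z) := continuousOn_univ.1 <|
    hF'.comp (f := fun ξ => (z, ξ)) (by fun_prop) fun ξ _ => ⟨hz, trivial⟩
  refine (hasDerivAt_integral_of_dominated_loc_of_deriv_le (F := fun z ξ => u ξ • F z ξ)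
    (F' := fun z ξ => u ξ • F' z ξ) (bound := fun ξ => |u ξ| * C)
    (Metric.closedBall_mem_nhds z hε) ?_ (hint z hz) (hu.smul hF'z).aestronglyMeasurable
    (Eventually.of_forall fun ξ w hw => ?_)
    ((hu.integrable_of_hasCompactSupport hc).abs.mul_const C)
    (Eventually.of_forall fun ξ w hw => (hd w (hball hw) ξ).const_smul (u ξ))).2
  · filter_upwards [hS.mem_nhds hz] with w hw using (hint w hw).aestronglyMeasurable
  · rw [norm_smul, Real.norm_eq_abs]
    by_cases hξ : ξ ∈ tsupport u
    · exact mul_le_mul_of_nonneg_left (hC (w, ξ) ⟨hw, hξ⟩) (abs_nonneg _)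
    · simp [image_eq_zero_of_notMem_tsupport hξ]

end ParametricIntegral

section IteratedLIntegral

theorem lintegral_setLIntegral_ofReal_lt_top {α β : Type*} [MeasurableSpace α] [MeasurableSpace β]
    {μ : Measure α} {ν : Measure β} {S : Set α} (hS : μ S ≠ ∞) {T : Set β} (hT : MeasurableSet T)
    {g : β → ℝ} (hg : IntegrableOn g T ν) {f : β → α → ℝ} (hfg : ∀ y ∈ T, ∀ x, f y x ≤ g y) :
    ∫⁻ y in T, ∫⁻ x in S, ENNReal.ofReal (f y x) ∂μ ∂ν < ∞ :=
  calc ∫⁻ y in T, ∫⁻ x in S, ENNReal.ofReal (f y x) ∂μ ∂ν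
      ≤ ∫⁻ y in T, ENNReal.ofReal (g y) * μ S ∂ν := by
        refine setLIntegral_mono' hT fun y hy => ?_
        rw [← setLIntegral_const]
        exact lintegral_mono fun x => ENNReal.ofReal_le_ofReal (hfg y hy x)
    _ = (∫⁻ y in T, ENNReal.ofReal (g y) ∂ν) * μ S := lintegral_mul_const' _ _ hS
    _ < ∞ := ENNReal.mul_lt_top hg.lintegral_lt_top hS.lt_top

theorem lintegral_lintegral_pos_of_continuousAt {α β : Type*} [TopologicalSpace α]
    [MeasurableSpace α] [OpensMeasurableSpace α] [TopologicalSpace β] [MeasurableSpace β]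
    [OpensMeasurableSpace β] {μ : Measure α} [μ.IsOpenPosMeasure] {ν : Measure β}
    [ν.IsOpenPosMeasure] {U : Set α} (hU : IsOpen U) {V : Set β} (hV : IsOpen V)
    {g : β × α → ℝ≥0∞} {p : β × α} (hp : p ∈ V ×ˢ U) (hg : ContinuousAt g p) (hpos : 0 < g p) :
    0 < ∫⁻ y in V, ∫⁻ x in U, g (y, x) ∂μ ∂ν := by
  obtain ⟨c, hc₀, hc⟩ := exists_between hpos
  obtain ⟨V', U', hV', hpV, hU', hpU, hsub⟩ := mem_nhds_prod_iff'.1 (hg.eventually_const_lt hc)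
  have h_le (y : β) (hy : y ∈ V ∩ V') : c * μ (U ∩ U') ≤ ∫⁻ x in U, g (y, x) ∂μ :=
    calc c * μ (U ∩ U') = ∫⁻ _ in U ∩ U', c ∂μ := (setLIntegral_const _ _).symm
      _ ≤ ∫⁻ x in U ∩ U', g (y, x) ∂μ :=
        setLIntegral_mono' (hU.inter hU').measurableSet fun x hx => (hsub ⟨hy.2, hx.2⟩).le
      _ ≤ ∫⁻ x in U, g (y, x) ∂μ := lintegral_mono_set Set.inter_subset_left
  calc 0 < c * μ (U ∩ U') * ν (V ∩ V') :=
        ENNReal.mul_pos (mul_ne_zero hc₀.ne' ((hU.inter hU').measure_pos μ ⟨_, hp.2, hpU⟩).ne')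
          ((hV.inter hV').measure_pos ν ⟨_, hp.1, hpV⟩).ne'
    _ = ∫⁻ _ in V ∩ V', c * μ (U ∩ U') ∂ν := (setLIntegral_const _ _).symm
    _ ≤ ∫⁻ y in V ∩ V', ∫⁻ x in U, g (y, x) ∂μ ∂ν :=
        setLIntegral_mono' (hV.inter hV').measurableSet h_le
    _ ≤ ∫⁻ y in V, ∫⁻ x in U, g (y, x) ∂μ ∂ν := lintegral_mono_set Set.inter_subset_left

end IteratedLIntegral

section Holder

open scoped NNReal

variable {X : Type*} [PseudoMetricSpace X] {u : X → ℝ}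

theorem exists_holderWith_zero_of_hasCompactSupport (hu : Continuous u)
    (hc : HasCompactSupport u) : ∃ C, HolderWith C 0 u := by
  obtain ⟨M, hM⟩ := hc.exists_bound_of_continuous hu
  refine ⟨(2 * M).toNNReal, fun x x' => ?_⟩
  rw [NNReal.coe_zero, ENNReal.rpow_zero, mul_one, edist_dist]
  refine ENNReal.ofReal_le_ofReal ?_
  calc dist (u x) (u x') ≤ ‖u x‖ + ‖u x'‖ := dist_le_norm_add_norm _ _
    _ ≤ 2 * M := by linarith [hM x, hM x']

theorem exists_holderWith_of_hasCompactSupport {C a b : ℝ≥0} (hu : HolderWith C a u)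
    (ha : 0 < a) (hc : HasCompactSupport u) (hb : b ≤ a) : ∃ D, HolderWith D b u :=
  let ⟨_, hD⟩ := exists_holderWith_zero_of_hasCompactSupport (hu.continuous ha) hc
  ⟨_, hD.of_le_of_le hu b.coe_nonneg hb⟩

theorem holderWith_sub_const {C a : ℝ≥0} (hu : HolderWith C a u) (c : ℝ) :
    HolderWith C a fun x => u x - c := fun x x' => by
  simpa only [edist_sub_right] using hu x x'

end Holder

section LineExtension

variable {E : Type*} [NormedAddCommGroup E] [InnerProductSpace ℝ E]

/-- The extension to complex `τ` of the quadratic polynomial `τ ↦ ‖ζ + τ • e‖²`. -/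
noncomputable def complexLineNormSq (ζ e : E) (τ : ℂ) : ℂ :=
  (‖ζ‖ ^ 2 : ℝ) + (2 * inner ℝ ζ e : ℝ) * τ + (‖e‖ ^ 2 : ℝ) * τ ^ 2

theorem complexLineNormSq_ofReal (ζ e : E) (τ : ℝ) :
    complexLineNormSq ζ e τ = (‖ζ + τ • e‖ ^ 2 : ℝ) := by
  rw [complexLineNormSq, norm_add_sq_real, inner_smul_right, norm_smul, mul_pow, norm_eq_abs,
    sq_abs]
  push_cast
  ring

theorem re_complexLineNormSq (ζ e : E) (τ : ℂ) :
    (complexLineNormSq ζ e τ).re = ‖ζ + τ.re • e‖ ^ 2 - (τ.im * ‖e‖) ^ 2 := by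
  rw [complexLineNormSq, norm_add_sq_real, inner_smul_right, norm_smul, mul_pow, norm_eq_abs,
    sq_abs]
  simp only [Complex.add_re, Complex.mul_re, Complex.ofReal_re, Complex.ofReal_im, sq τ]
  ring

theorem hasDerivAt_complexLineNormSq (ζ e : E) (τ : ℂ) :
    HasDerivAt (complexLineNormSq ζ e)
      ((2 * inner ℝ ζ e : ℝ) + (‖e‖ ^ 2 : ℝ) * (2 * τ)) τ := by
  have h_sq : HasDerivAt (fun z : ℂ => z ^ 2) (2 * τ) τ := by simpa using hasDerivAt_pow 2 τ
  have h_linear := (hasDerivAt_id τ).const_mul ((2 * inner ℝ ζ e : ℝ) : ℂ)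
  rw [mul_one] at h_linear
  exact (h_linear.const_add _).add (h_sq.const_mul _)

theorem complexLineNormSq_add_sq_mem_slitPlane (ζ : E) {e : E} {y : ℝ} {τ : ℂ}
    (hτ : |τ.im| * ‖e‖ < y) :
    complexLineNormSq ζ e τ + (y ^ 2 : ℝ) ∈ Complex.slitPlane := by
  refine Or.inl ?_
  have h_strip : (τ.im * ‖e‖) ^ 2 < y ^ 2 := by
    rw [← sq_abs, abs_mul, abs_norm]
    gcongr
  rw [Complex.add_re, re_complexLineNormSq, Complex.ofReal_re]
  linarith [sq_nonneg ‖ζ + τ.re • e‖]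

variable [MeasurableSpace E] [BorelSpace E]

theorem differentiableOn_integral_smul_complexLineNormSq_cpow {μ : Measure E}
    [IsFiniteMeasureOnCompacts μ] {u : E → ℝ} (hu : Continuous u) (hc : HasCompactSupport u)
    (x e : E) (y : ℝ) (γ : ℂ) :
    DifferentiableOn ℂ
      (fun τ => ∫ ξ, u ξ • (complexLineNormSq (x - ξ) e τ + (y ^ 2 : ℝ)) ^ γ ∂μ)
      {τ | |τ.im| * ‖e‖ < y} := by
  have h_strip : IsOpen {τ : ℂ | |τ.im| * ‖e‖ < y} :=
    isOpen_lt (by fun_prop) continuous_const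
  have h_joint : Continuous fun p : ℂ × E => complexLineNormSq (x - p.2) e p.1 + (y ^ 2 : ℝ) := by
    unfold complexLineNormSq
    fun_prop
  refine fun τ hτ => (hasDerivAt_integral_smul_of_hasCompactSupport hu hc h_strip
    (fun τ hτ => ?_) ?_
    (fun τ hτ ξ => ((hasDerivAt_complexLineNormSq (x - ξ) e τ).add_const _).cpow_const
      (complexLineNormSq_add_sq_mem_slitPlane _ hτ))
    hτ).differentiableAt.differentiableWithinAt
  · exact (h_joint.comp (.prodMk_right τ)).cpow continuous_const
      fun ξ => complexLineNormSq_add_sq_mem_slitPlane _ hτ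
  · exact (continuousOn_const.mul (h_joint.continuousOn.cpow continuousOn_const
      fun p hp => complexLineNormSq_add_sq_mem_slitPlane _ hp.1)).mul (by fun_prop)

end LineExtension

section Energy

variable {E : Type*} [NormedAddCommGroup E] [NormedSpace ℝ E]

/-- The weighted Dirichlet energy density `y^{1-2s} |∇w|²` at `(x, y)`; the squared full gradient
is split as `‖∇ₓw‖² + (∂_y w)²`. -/
noncomputable def csEnergyDensity (s : ℝ) (w : E → ℝ → ℝ) (x : E) (y : ℝ) : ℝ :=
  y ^ (1 - 2 * s) * (‖fderiv ℝ (fun x' => w x' y) x‖ ^ 2 + (deriv (fun t => w x t) y) ^ 2)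

variable [MeasureSpace E]

/-- The weighted Dirichlet energy of `w` over the cylinder `Ω × (0, ∞)`. -/
noncomputable def csEnergy (s : ℝ) (w : E → ℝ → ℝ) (Ω : Set E) : ℝ≥0∞ :=
  ∫⁻ y in Set.Ioi (0 : ℝ), ∫⁻ x in Ω, ENNReal.ofReal (csEnergyDensity s w x y)

theorem csEnergy_mono (s : ℝ) (w : E → ℝ → ℝ) {Ω Ω' : Set E} (h : Ω ⊆ Ω') :
    csEnergy s w Ω ≤ csEnergy s w Ω' :=
  lintegral_mono fun _ => lintegral_mono_set h

theorem csEnergy_add_le_csEnergy_union (s : ℝ) (w : E → ℝ → ℝ) {Ω V : Set E} (hV : MeasurableSet V)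
    (h : Disjoint Ω V) : csEnergy s w Ω + csEnergy s w V ≤ csEnergy s w (Ω ∪ V) := by
  refine (le_lintegral_add _ _).trans_eq ?_
  simp only [csEnergy, lintegral_union hV h]

end Energy

theorem exists_abs_rpow_mul_rpow_sub_one_le (a b : ℝ) :
    ∃ A ≥ 0, ∃ ε > 0, ∀ p q t : ℝ, t < ε → |p - 1| ≤ t → |q - 1| ≤ t →
      |p ^ a * q ^ b - 1| ≤ A * t := by
  have h_diff : DifferentiableAt ℝ (fun r : ℝ × ℝ => r.1 ^ a * r.2 ^ b) (1, 1) := by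
    fun_prop (disch := norm_num)
  obtain ⟨A, hA, hbound⟩ := h_diff.isBigO_sub.exists_nonneg
  obtain ⟨ε, hε, hball⟩ := Metric.eventually_nhds_iff.1 hbound.bound
  refine ⟨A, hA, ε, hε, fun p q t ht hp hq => ?_⟩
  have h_dist : ‖((p, q) : ℝ × ℝ) - (1, 1)‖ ≤ t := max_le hp hq
  have h_near := hball (by rw [dist_eq_norm]; exact h_dist.trans_lt ht)
  simp only [one_rpow, mul_one] at h_near
  exact h_near.trans (by gcongr)

theorem abs_norm_sq_add_sq_div_sub_one_le {E : Type*} [SeminormedAddCommGroup E] {z z' : E}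
    {y y' δ : ℝ} (hy : 0 < y) (hδ : δ ≤ y) (hz : ‖z' - z‖ ≤ δ) (hy' : |y' - y| ≤ δ) :
    |(‖z'‖ ^ 2 + y' ^ 2) / (‖z‖ ^ 2 + y ^ 2) - 1| ≤ 5 * (δ / y) := by
  have hδ₀ : 0 ≤ δ := (norm_nonneg _).trans hz
  have hρ : 0 < ‖z‖ ^ 2 + y ^ 2 := by positivity
  have h_sq {a b : ℝ} (ha : 0 ≤ a) (hab : |b - a| ≤ δ) : |b ^ 2 - a ^ 2| ≤ δ * (2 * a + δ) := by
    rw [sq_sub_sq, abs_mul, mul_comm]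
    gcongr
    exact abs_le.2 ⟨by linarith [(abs_le.1 hab).1], by linarith [(abs_le.1 hab).2]⟩
  have h_num : |‖z'‖ ^ 2 + y' ^ 2 - (‖z‖ ^ 2 + y ^ 2)| ≤
      δ * (2 * ‖z‖ + δ) + δ * (2 * y + δ) := by
    rw [add_sub_add_comm]
    exact (abs_add_le _ _).trans (add_le_add
      (h_sq (norm_nonneg z) ((abs_norm_sub_norm_le z' z).trans hz)) (h_sq hy.le hy'))
  rw [div_sub_one hρ.ne', abs_div, abs_of_pos hρ, div_le_iff₀ hρ]
  calc _ ≤ δ * (2 * ‖z‖ + δ) + δ * (2 * y + δ) := h_num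
    _ ≤ δ * (2 * ‖z‖ + y) + δ * (2 * y + y) := by gcongr
    _ = δ / y * (2 * ‖z‖ * y + 4 * y ^ 2) := by field_simp; ring
    _ ≤ δ / y * (5 * (‖z‖ ^ 2 + y ^ 2)) := by
      gcongr
      nlinarith [sq_nonneg (‖z‖ - y), sq_nonneg ‖z‖]
    _ = _ := by ring

section Kernel

variable {E : Type*} [NormedAddCommGroup E] [NormedSpace ℝ E]

/-- The Caffarelli–Silvestre Poisson kernel `y^{2s} (|z|² + y²)^{-(d + 2s)/2}`, `d = dim E`, at
height `y`, without its normalising constant. -/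
noncomputable def csKernel (s y : ℝ) (z : E) : ℝ :=
  y ^ (2 * s) * (‖z‖ ^ 2 + y ^ 2) ^ (-((Module.finrank ℝ E : ℝ) + 2 * s) / 2)

theorem csKernel_pos (s : ℝ) {y : ℝ} (hy : 0 < y) (z : E) : 0 < csKernel s y z := by
  rw [csKernel]
  positivity

theorem continuous_csKernel (s : ℝ) {y : ℝ} (hy : 0 < y) :
    Continuous (csKernel s y : E → ℝ) :=
  continuous_const.mul (Continuous.rpow_const (by fun_prop) fun z => Or.inl (by positivity))

theorem csKernel_smul (s : ℝ) {y : ℝ} (hy : 0 < y) (η : E) :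
    csKernel s y (y • η) = y ^ (-(Module.finrank ℝ E : ℝ)) * csKernel s 1 η := by
  have h_factor : ‖y • η‖ ^ 2 + y ^ 2 = y ^ (2 : ℝ) * (‖η‖ ^ 2 + 1 ^ 2) := by
    rw [norm_smul, Real.norm_of_nonneg hy.le, Real.rpow_two]
    ring
  rw [csKernel, csKernel, h_factor, mul_rpow (by positivity) (by positivity), ← rpow_mul hy.le,
    ← mul_assoc, ← rpow_add hy, one_rpow, one_mul]
  ring_nf

theorem csKernel_le_rpow_neg_finrank {s : ℝ} (hs : 0 ≤ s) {y : ℝ} (hy : 0 < y) (z : E) :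
    csKernel s y z ≤ y ^ (-(Module.finrank ℝ E : ℝ)) :=
  calc csKernel s y z
      ≤ y ^ (2 * s) * (y ^ 2) ^ (-((Module.finrank ℝ E : ℝ) + 2 * s) / 2) := by
        refine mul_le_mul_of_nonneg_left (rpow_le_rpow_of_nonpos (by positivity) ?_ ?_)
          (by positivity)
        · linarith [sq_nonneg ‖z‖]
        · have : (0 : ℝ) ≤ Module.finrank ℝ E := by positivity
          linarith
    _ = y ^ (-(Module.finrank ℝ E : ℝ)) := by
        rw [← rpow_two, ← rpow_mul hy.le, ← rpow_add hy]
        ring_nf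

theorem exists_abs_csKernel_sub_le (s : ℝ) :
    ∃ A ≥ 0, ∃ ε ∈ Set.Ioo (0 : ℝ) 1, ∀ (z z' : E) (y y' δ : ℝ), 0 < y → δ ≤ ε * y →
      ‖z' - z‖ ≤ δ → |y' - y| ≤ δ →
        |csKernel s y' z' - csKernel s y z| ≤ A * (δ / y) * csKernel s y z := by
  set γ := -((Module.finrank ℝ E : ℝ) + 2 * s) / 2 with hγ
  obtain ⟨A, hA, ε, hε, h_power⟩ := exists_abs_rpow_mul_rpow_sub_one_le (2 * s) γ
  refine ⟨5 * A, by positivity, min (ε / 10) (1 / 10), ⟨by positivity, by norm_num⟩, ?_⟩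
  intro z z' y y' δ hy hδε hz hy'
  have hδ₀ : 0 ≤ δ / y := div_nonneg ((norm_nonneg _).trans hz) hy.le
  obtain ⟨h_small, h_tenth⟩ := le_min_iff.1 ((div_le_iff₀ hy).2 hδε)
  have h_height : |y' / y - 1| ≤ δ / y := by
    rw [div_sub_one hy.ne', abs_div, abs_of_pos hy]
    gcongr
  have h_dist := abs_norm_sq_add_sq_div_sub_one_le hy ((div_le_one hy).1 (by linarith)) hz hy'
  have h_ratio := h_power _ _ _ (by linarith) (h_height.trans (by linarith)) h_dist
  set p := y' / y
  set q := (‖z'‖ ^ 2 + y' ^ 2) / (‖z‖ ^ 2 + y ^ 2)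
  have hp : 0 ≤ p := by linarith [(abs_le.1 h_height).1]
  have hq : 0 ≤ q := by positivity
  have h_factor : csKernel s y' z' = csKernel s y z * (p ^ (2 * s) * q ^ γ) := by
    rw [csKernel, csKernel, ← hγ, mul_mul_mul_comm, ← mul_rpow hy.le hp,
      ← mul_rpow (by positivity) hq, mul_div_cancel₀ _ hy.ne',
      mul_div_cancel₀ _ (by positivity)]
  rw [h_factor, ← mul_sub_one, abs_mul, abs_of_pos (csKernel_pos s hy z), mul_comm]
  refine mul_le_mul_of_nonneg_right ?_ (csKernel_pos s hy z).le
  linarith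

theorem hasDerivAt_csKernel (s : ℝ) {y : ℝ} (hy : 0 < y) (z : E) :
    HasDerivAt (fun t => csKernel s t z)
      (2 * s * y ^ (2 * s - 1) *
          (‖z‖ ^ 2 + y ^ 2) ^ (-((Module.finrank ℝ E : ℝ) + 2 * s) / 2) +
        y ^ (2 * s) * (2 * y * (-((Module.finrank ℝ E : ℝ) + 2 * s) / 2) *
          (‖z‖ ^ 2 + y ^ 2) ^ (-((Module.finrank ℝ E : ℝ) + 2 * s) / 2 - 1))) y := by
  have h_sq : HasDerivAt (fun t => ‖z‖ ^ 2 + t ^ 2) (2 * y) y := by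
    simpa using (hasDerivAt_pow 2 y).const_add (‖z‖ ^ 2)
  exact (hasDerivAt_rpow_const (Or.inl hy.ne')).mul (h_sq.rpow_const (Or.inl (by positivity)))

theorem continuousOn_deriv_csKernel (s : ℝ) :
    ContinuousOn (fun p : ℝ × E => deriv (fun t => csKernel s t p.2) p.1)
      (Set.Ioi 0 ×ˢ Set.univ) := by
  refine ContinuousOn.congr ?_ fun p hp => (hasDerivAt_csKernel s hp.1 p.2).deriv
  have h_height (r : ℝ) : ContinuousOn (fun p : ℝ × E => p.1 ^ r) (Set.Ioi 0 ×ˢ Set.univ) :=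
    continuousOn_fst.rpow_const fun p hp => Or.inl (ne_of_gt hp.1)
  have h_dist (r : ℝ) :
      ContinuousOn (fun p : ℝ × E => (‖p.2‖ ^ 2 + p.1 ^ 2) ^ r) (Set.Ioi 0 ×ˢ Set.univ) := by
    refine ContinuousOn.rpow_const (by fun_prop) fun p hp => Or.inl ?_
    have : 0 < p.1 := hp.1
    positivity
  exact ((continuousOn_const.mul (h_height _)).mul (h_dist _)).add
    ((h_height _).mul (ContinuousOn.mul (by fun_prop) (h_dist _)))

variable [FiniteDimensional ℝ E] [MeasurableSpace E] [BorelSpace E]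

theorem integrable_norm_rpow_mul_csKernel_one (μ : Measure E) [μ.IsAddHaarMeasure] {s b : ℝ}
    (hb₀ : 0 ≤ b) (hb : b < 2 * s) : Integrable (fun η : E => ‖η‖ ^ b * csKernel s 1 η) μ := by
  have h_bracket := integrable_rpow_neg_one_add_norm_sq (E := E) (μ := μ)
    (r := (Module.finrank ℝ E : ℝ) + (2 * s - b)) (by linarith)
  refine h_bracket.mono' ?_ (Eventually.of_forall fun η => ?_)
  · exact (Continuous.mul (continuous_norm.rpow_const fun _ => Or.inr hb₀)
      (continuous_csKernel s one_pos)).aestronglyMeasurable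
  · have h_norm : ‖η‖ ^ b ≤ (1 + ‖η‖ ^ 2) ^ (b / 2) :=
      calc ‖η‖ ^ b = (‖η‖ ^ 2) ^ (b / 2) := by
            rw [← rpow_two, ← rpow_mul (norm_nonneg η)]
            ring_nf
        _ ≤ (1 + ‖η‖ ^ 2) ^ (b / 2) := by
            gcongr
            linarith
    rw [norm_of_nonneg (mul_nonneg (by positivity) (csKernel_pos s one_pos η).le), csKernel,
      one_rpow, one_mul, one_pow, add_comm (‖η‖ ^ 2) 1]
    calc _ ≤ (1 + ‖η‖ ^ 2) ^ (b / 2) *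
          (1 + ‖η‖ ^ 2) ^ (-((Module.finrank ℝ E : ℝ) + 2 * s) / 2) := by gcongr
      _ = _ := by
        rw [← rpow_add (by positivity)]
        ring_nf

theorem integrable_csKernel_one (μ : Measure E) [μ.IsAddHaarMeasure] {s : ℝ} (hs : 0 < s) :
    Integrable (csKernel s 1 : E → ℝ) μ := by
  simpa only [rpow_zero, one_mul] using
    integrable_norm_rpow_mul_csKernel_one μ le_rfl (mul_pos two_pos hs)

theorem integral_csKernel_one_pos (μ : Measure E) [μ.IsAddHaarMeasure] {s : ℝ} (hs : 0 < s) :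
    0 < ∫ η : E, csKernel s 1 η ∂μ :=
  integral_pos_of_integrable_nonneg_nonzero (continuous_csKernel s one_pos)
    (integrable_csKernel_one μ hs) (fun η => (csKernel_pos s one_pos η).le)
    (csKernel_pos s one_pos 0).ne'

theorem integral_mul_csKernel_sub (μ : Measure E) [μ.IsAddHaarMeasure] (f : E → ℝ) (s : ℝ) (x : E)
    {y : ℝ} (hy : 0 < y) :
    ∫ ξ, f ξ * csKernel s y (x - ξ) ∂μ = ∫ η, f (x - y • η) * csKernel s 1 η ∂μ := by
  have h_scale := Measure.integral_comp_smul μ (fun ζ => f (x - ζ) * csKernel s y ζ) y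
  simp only [csKernel_smul s hy, smul_eq_mul, mul_left_comm (f _) _ _, integral_const_mul,
    rpow_neg hy.le, rpow_natCast, abs_of_pos (inv_pos.2 (pow_pos hy _))] at h_scale
  rw [mul_left_cancel₀ (inv_ne_zero (pow_ne_zero _ hy.ne')) h_scale,
    ← integral_sub_left_eq_self (fun ζ => f (x - ζ) * csKernel s y ζ) μ x]
  simp only [sub_sub_cancel]

theorem integrable_mul_csKernel_sub_iff (μ : Measure E) [μ.IsAddHaarMeasure] {f : E → ℝ} {s : ℝ}
    {x : E} {y : ℝ} (hy : 0 < y) :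
    Integrable (fun ξ => f ξ * csKernel s y (x - ξ)) μ ↔
      Integrable (fun η => f (x - y • η) * csKernel s 1 η) μ := by
  have h_scale := integrable_comp_smul_iff μ (fun ζ => f (x - ζ) * csKernel s y ζ) hy.ne'
  simp only [csKernel_smul s hy, mul_left_comm (f _) _ _,
    integrable_const_mul_iff (rpow_pos_of_pos hy _).ne'.isUnit] at h_scale
  rw [h_scale, ← integrable_comp_sub_left (fun ζ => f (x - ζ) * csKernel s y ζ) x]
  simp only [sub_sub_cancel]

end Kernel

section Extension

open scoped NNReal Topology

variable {E : Type*} [NormedAddCommGroup E] [InnerProductSpace ℝ E] [FiniteDimensional ℝ E]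
  [MeasurableSpace E] [BorelSpace E] {s : ℝ} {u : E → ℝ} {b C : ℝ≥0}

/-- The Caffarelli–Silvestre extension of `u` to the half-space, without the normalising constant
of its Poisson kernel. -/
noncomputable def csExtension (s : ℝ) (u : E → ℝ) (x : E) (y : ℝ) : ℝ :=
  ∫ ξ, u ξ * csKernel s y (x - ξ)

theorem integrable_comp_sub_smul_mul_csKernel_one (hu : Continuous u) (hC : HolderWith C b u)
    (hb : b < 2 * s) (x : E) {y : ℝ} (hy : 0 < y) :
    Integrable fun η => u (x - y • η) * csKernel s 1 η := by
  have h_mass := integrable_csKernel_one (E := E) volume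
    (by linarith [b.coe_nonneg] : 0 < s)
  have h_moment := integrable_norm_rpow_mul_csKernel_one (E := E) volume b.coe_nonneg hb
  refine ((h_mass.const_mul |u x|).add (h_moment.const_mul (C * y ^ (b : ℝ)))).mono'
    (Continuous.aestronglyMeasurable
      (Continuous.mul (by fun_prop) (continuous_csKernel s one_pos)))
    (Eventually.of_forall fun η => ?_)
  have hK := csKernel_pos s one_pos η
  have h_osc := hC.dist_le (x - y • η) x
  rw [dist_self_sub_left, norm_smul, norm_of_nonneg hy.le, mul_rpow hy.le (norm_nonneg _)] at h_osc
  calc ‖u (x - y • η) * csKernel s 1 η‖ = |u (x - y • η)| * csKernel s 1 η := by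
        rw [norm_mul, norm_of_nonneg hK.le, Real.norm_eq_abs]
    _ ≤ (|u x| + C * (y ^ (b : ℝ) * ‖η‖ ^ (b : ℝ))) * csKernel s 1 η := by
        gcongr
        linarith [abs_sub_abs_le_abs_sub (u (x - y • η)) (u x), Real.dist_eq (u (x - y • η)) (u x)]
    _ = _ := by
        simp only [Pi.add_apply]
        ring

theorem integrable_mul_csKernel_sub (hu : Continuous u) (hC : HolderWith C b u) (hb : b < 2 * s)
    (x : E) {y : ℝ} (hy : 0 < y) : Integrable fun ξ => u ξ * csKernel s y (x - ξ) :=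
  (integrable_mul_csKernel_sub_iff volume hy).2
    (integrable_comp_sub_smul_mul_csKernel_one hu hC hb x hy)

theorem integral_abs_sub_mul_csKernel_le (hC : HolderWith C b u)
    (hb : b < 2 * s) (x : E) {y : ℝ} (hy : 0 < y) :
    ∫ ξ, |u ξ - u x| * csKernel s y (x - ξ) ≤
      C * y ^ (b : ℝ) * ∫ η : E, ‖η‖ ^ (b : ℝ) * csKernel s 1 η := by
  rw [integral_mul_csKernel_sub volume (fun ξ => |u ξ - u x|) s x hy, ← integral_const_mul]
  refine integral_mono_of_nonneg
    (Eventually.of_forall fun η => mul_nonneg (abs_nonneg _) (csKernel_pos s one_pos η).le)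
    ((integrable_norm_rpow_mul_csKernel_one volume b.coe_nonneg hb).const_mul _)
    (Eventually.of_forall fun η => ?_)
  have h_osc := hC.dist_le (x - y • η) x
  rw [dist_self_sub_left, norm_smul, norm_of_nonneg hy.le, mul_rpow hy.le (norm_nonneg _),
    Real.dist_eq, ← mul_assoc] at h_osc
  simp only [← mul_assoc]
  exact mul_le_mul_of_nonneg_right h_osc (csKernel_pos s one_pos η).le

theorem csExtension_sub_csExtension (hu : Continuous u) (hC : HolderWith C b u) (hb : b < 2 * s)
    (x x' : E) {y y' : ℝ} (hy : 0 < y) (hy' : 0 < y') :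
    csExtension s u x' y' - csExtension s u x y =
      ∫ ξ, (u ξ - u x) * (csKernel s y' (x' - ξ) - csKernel s y (x - ξ)) := by
  have h_const : HolderWith 0 0 fun _ : E => u x := .const
  have hs : ((0 : ℝ≥0) : ℝ) < 2 * s := b.coe_nonneg.trans_lt hb
  have h_mass : csExtension s (fun _ => u x) x' y' = csExtension s (fun _ => u x) x y := by
    rw [csExtension, csExtension, integral_mul_csKernel_sub volume (fun _ => u x) s x hy,
      integral_mul_csKernel_sub volume (fun _ => u x) s x' hy']
  have h_split {z : E} {t : ℝ} (ht : 0 < t) :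
      ∫ ξ, (u ξ - u x) * csKernel s t (z - ξ) =
        csExtension s u z t - csExtension s (fun _ => u x) z t := by
    simp only [sub_mul]
    exact integral_sub (integrable_mul_csKernel_sub hu hC hb z ht)
      (integrable_mul_csKernel_sub continuous_const h_const hs z ht)
  simp only [mul_sub]
  rw [integral_sub, h_split hy, h_split hy', h_mass, sub_sub_sub_cancel_right]
  all_goals
    exact integrable_mul_csKernel_sub (by fun_prop) (holderWith_sub_const hC _) hb _ (by assumption)

theorem exists_abs_csExtension_sub_le (hu : Continuous u) (hC : HolderWith C b u)
    (hb : b < 2 * s) :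
    ∃ A ≥ 0, ∃ ε > 0, ∀ (x x' : E) (y y' δ : ℝ), 0 < y → δ ≤ ε * y → ‖x' - x‖ ≤ δ →
      |y' - y| ≤ δ → |csExtension s u x' y' - csExtension s u x y| ≤ A * y ^ (b - 1 : ℝ) * δ := by
  obtain ⟨A, hA, ε, ⟨hε₀, hε₁⟩, h_kernel⟩ := exists_abs_csKernel_sub_le (E := E) s
  set H := ∫ η : E, ‖η‖ ^ (b : ℝ) * csKernel s 1 η
  have hH : 0 ≤ H := integral_nonneg fun η =>
    mul_nonneg (by positivity) (csKernel_pos s one_pos η).le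
  refine ⟨A * C * H, by positivity, ε, hε₀, fun x x' y y' δ hy hδε hx hy' => ?_⟩
  have hδ : 0 ≤ δ := (norm_nonneg _).trans hx
  have hy₀ : 0 < y' := by nlinarith [(abs_le.1 hy').1]
  have h_int : Integrable fun ξ => |u ξ - u x| * csKernel s y (x - ξ) := by
    simpa only [abs_mul, abs_of_pos (csKernel_pos s hy _)] using (integrable_mul_csKernel_sub
      (u := fun ξ => u ξ - u x) (by fun_prop) (holderWith_sub_const hC _) hb x hy).abs
  rw [csExtension_sub_csExtension hu hC hb x x' hy hy₀]
  calc |∫ ξ, (u ξ - u x) * (csKernel s y' (x' - ξ) - csKernel s y (x - ξ))|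
      ≤ ∫ ξ, A * (δ / y) * (|u ξ - u x| * csKernel s y (x - ξ)) := by
        rw [← Real.norm_eq_abs]
        refine norm_integral_le_of_norm_le (h_int.const_mul _) (Eventually.of_forall fun ξ => ?_)
        rw [norm_mul, Real.norm_eq_abs, Real.norm_eq_abs, mul_left_comm]
        gcongr
        exact h_kernel _ _ _ _ _ hy hδε (by rwa [sub_sub_sub_cancel_right]) hy'
    _ ≤ A * (δ / y) * (C * y ^ (b : ℝ) * H) := by
        rw [integral_const_mul]
        gcongr
        exact integral_abs_sub_mul_csKernel_le hC hb x hy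
    _ = A * C * H * y ^ (b - 1 : ℝ) * δ := by
        rw [rpow_sub_one hy.ne']
        ring

theorem exists_csEnergyDensity_csExtension_le (hu : Continuous u) (hC : HolderWith C b u)
    (hb : b < 2 * s) :
    ∃ A, ∀ x y, 0 < y → csEnergyDensity s (csExtension s u) x y ≤ A * y ^ (2 * b - 1 - 2 * s) := by
  obtain ⟨A, hA, ε, hε, h_lip⟩ := exists_abs_csExtension_sub_le hu hC hb
  refine ⟨2 * A ^ 2, fun x y hy => ?_⟩
  have h_slope : 0 ≤ A * y ^ (b - 1 : ℝ) := by positivity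
  have h_grad : ‖fderiv ℝ (fun x' => csExtension s u x' y) x‖ ≤ A * y ^ (b - 1 : ℝ) := by
    refine norm_fderiv_le_of_lip' ℝ h_slope ?_
    filter_upwards [Metric.closedBall_mem_nhds x (mul_pos hε hy)] with x' hx'
    exact h_lip x x' y y _ hy (mem_closedBall_iff_norm.1 hx') le_rfl (by simp)
  have h_deriv : ‖deriv (fun t => csExtension s u x t) y‖ ≤ A * y ^ (b - 1 : ℝ) := by
    refine norm_deriv_le_of_lip' h_slope ?_
    filter_upwards [Metric.closedBall_mem_nhds y (mul_pos hε hy)] with t ht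
    exact h_lip x x y t _ hy (mem_closedBall_iff_norm.1 ht) (by simp) le_rfl
  calc csEnergyDensity s (csExtension s u) x y
      ≤ y ^ (1 - 2 * s) * ((A * y ^ (b - 1 : ℝ)) ^ 2 + (A * y ^ (b - 1 : ℝ)) ^ 2) := by
        rw [csEnergyDensity, ← sq_abs (deriv _ _), ← Real.norm_eq_abs]
        gcongr
    _ = 2 * A ^ 2 * (y ^ (1 - 2 * s) * (y ^ (b - 1 : ℝ)) ^ (2 : ℝ)) := by
        rw [rpow_two]
        ring
    _ = 2 * A ^ 2 * y ^ (2 * b - 1 - 2 * s) := by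
        rw [← rpow_mul hy.le, ← rpow_add hy]
        ring_nf

theorem setLIntegral_csEnergyDensity_csExtension_lt_top (hu : Continuous u) (hC : HolderWith C b u)
    (hb : b < 2 * s) {Ω : Set E} (hΩ : volume Ω ≠ ∞) {T : Set ℝ} (hT : MeasurableSet T)
    (hT₀ : T ⊆ Set.Ioi 0)
    (h_int : IntegrableOn (fun y => y ^ (2 * b - 1 - 2 * s)) T) :
    ∫⁻ y in T, ∫⁻ x in Ω, ENNReal.ofReal (csEnergyDensity s (csExtension s u) x y) < ∞ := by
  obtain ⟨A, hA⟩ := exists_csEnergyDensity_csExtension_le hu hC hb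
  exact lintegral_setLIntegral_ofReal_lt_top hΩ hT (h_int.const_mul A)
    fun y hy x => hA x y (hT₀ hy)

-- Near `y = 0` the exponent `2b - 1 - 2s` exceeds `-1` for some `b ∈ (s, 2s)`; near infinity
-- `b = 0` gives the exponent `-1 - 2s`.
theorem csEnergy_csExtension_lt_top (hs : 0 < s) {a : ℝ≥0} (ha : s < a) (hu : HolderWith C a u)
    (hc : HasCompactSupport u) {Ω : Set E} (hΩ : volume Ω ≠ ∞) :
    csEnergy s (csExtension s u) Ω < ∞ := by
  have ha₀ : 0 < a := NNReal.coe_pos.1 (hs.trans ha)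
  have hcont := hu.continuous ha₀
  obtain ⟨b, hsb, hb⟩ := exists_between (lt_min ha (by linarith : s < 2 * s))
  obtain ⟨hba, hb₂⟩ := lt_min_iff.1 hb
  lift b to ℝ≥0 using (hs.trans hsb).le
  obtain ⟨D, hD⟩ := exists_holderWith_of_hasCompactSupport hu ha₀ hc (NNReal.coe_lt_coe.1 hba).le
  obtain ⟨D₀, hD₀⟩ := exists_holderWith_of_hasCompactSupport hu ha₀ hc zero_le
  have h_low := setLIntegral_csEnergyDensity_csExtension_lt_top hcont hD hb₂ hΩ
    measurableSet_Ioc Set.Ioc_subset_Ioi_self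
    ((intervalIntegrable_iff_integrableOn_Ioc_of_le zero_le_one).1
      (intervalIntegral.intervalIntegrable_rpow' (by linarith)))
  have h_high := setLIntegral_csEnergyDensity_csExtension_lt_top (s := s) hcont hD₀
    (by rw [NNReal.coe_zero]; linarith) hΩ measurableSet_Ioi (Set.Ioi_subset_Ioi zero_le_one)
    (integrableOn_Ioi_rpow_of_lt (by rw [NNReal.coe_zero]; linarith) zero_lt_one)
  rw [csEnergy, ← Set.Ioc_union_Ioi_eq_Ioi zero_le_one]
  exact (lintegral_union_le _ _ _).trans_lt (ENNReal.add_lt_top.2 ⟨h_low, h_high⟩)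

theorem hasDerivAt_csExtension (s : ℝ) (hu : Continuous u) (hc : HasCompactSupport u) (x : E)
    {y : ℝ} (hy : 0 < y) :
    HasDerivAt (fun t => csExtension s u x t)
      (∫ ξ, u ξ * deriv (fun t => csKernel s t (x - ξ)) y) y :=
  hasDerivAt_integral_smul_of_hasCompactSupport hu hc isOpen_Ioi
    (fun t ht => (continuous_csKernel s ht).comp (by fun_prop))
    ((continuousOn_deriv_csKernel s).comp (f := fun p : ℝ × E => (p.1, x - p.2)) (by fun_prop)
      fun p hp => ⟨hp.1, trivial⟩)
    (fun t ht ξ => (hasDerivAt_csKernel s ht (x - ξ)).differentiableAt.hasDerivAt) hy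

theorem continuousOn_deriv_csExtension (s : ℝ) (hu : Continuous u) (hc : HasCompactSupport u) :
    ContinuousOn (fun p : ℝ × E => deriv (fun t => csExtension s u p.2 t) p.1)
      (Set.Ioi 0 ×ˢ Set.univ) := by
  refine ContinuousOn.congr ?_ fun p hp => (hasDerivAt_csExtension s hu hc p.2 hp.1).deriv
  refine continuousOn_integral_of_compact_support hc ?_ fun p ξ _ hξ => ?_
  · exact ContinuousOn.mul (by fun_prop) ((continuousOn_deriv_csKernel s).comp
      (f := fun q : (ℝ × E) × E => (q.1.1, q.1.2 - q.2)) (by fun_prop)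
      fun q hq => ⟨hq.1.1, trivial⟩)
  · rw [image_eq_zero_of_notMem_tsupport hξ, zero_mul]

theorem tendsto_csExtension_atTop [Nontrivial E] (hs : 0 ≤ s) (hu : Integrable u) (x : E) :
    Tendsto (csExtension s u x) atTop (𝓝 0) := by
  have h_decay : Tendsto (fun y : ℝ => (∫ ξ, ‖u ξ‖) * y ^ (-(Module.finrank ℝ E : ℝ)))
      atTop (𝓝 0) := by
    simpa using (tendsto_rpow_neg_atTop (Nat.cast_pos.2 Module.finrank_pos)).const_mul _
  refine squeeze_zero_norm' ?_ h_decay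
  filter_upwards [eventually_gt_atTop 0] with y hy
  rw [← integral_mul_const]
  refine norm_integral_le_of_norm_le (hu.norm.mul_const _) (Eventually.of_forall fun ξ => ?_)
  rw [norm_mul, norm_of_nonneg (csKernel_pos s hy _).le]
  gcongr
  exact csKernel_le_rpow_neg_finrank hs hy _

theorem tendsto_csExtension_nhdsGT_zero (hs : 0 < s) (hu : Continuous u) {M : ℝ}
    (hM : ∀ ξ, ‖u ξ‖ ≤ M) (x : E) :
    Tendsto (csExtension s u x) (𝓝[>] 0) (𝓝 (u x * ∫ η : E, csKernel s 1 η)) := by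
  rw [← integral_const_mul]
  have h_dilated : ∀ᶠ y in 𝓝[>] (0 : ℝ),
      ∫ η, u (x - y • η) * csKernel s 1 η = csExtension s u x y := by
    filter_upwards [self_mem_nhdsWithin] with y hy
    exact (integral_mul_csKernel_sub volume u s x hy).symm
  refine (tendsto_integral_filter_of_dominated_convergence (fun η => M * csKernel s 1 η)
    (Eventually.of_forall fun y => ?_)
    (Eventually.of_forall fun y => Eventually.of_forall fun η => ?_)
    ((integrable_csKernel_one volume hs).const_mul M)
    (Eventually.of_forall fun η => ?_)).congr' h_dilated
  · exact Continuous.aestronglyMeasurable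
      (Continuous.mul (by fun_prop) (continuous_csKernel s one_pos))
  · rw [norm_mul, norm_of_nonneg (csKernel_pos s one_pos η).le]
    exact mul_le_mul_of_nonneg_right (hM _) (csKernel_pos s one_pos η).le
  · have h_cont : Continuous fun y : ℝ => u (x - y • η) := by fun_prop
    simpa using ((h_cont.tendsto 0).mono_left nhdsWithin_le_nhds).mul_const (csKernel s 1 η)

theorem analyticOnNhd_csExtension_line (s : ℝ) (hu : Continuous u)
    (hc : HasCompactSupport u) (x e : E) {y : ℝ} (hy : 0 < y) :
    AnalyticOnNhd ℝ (fun τ : ℝ => csExtension s u (x + τ • e) y) Set.univ := by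
  set γ := -((Module.finrank ℝ E : ℝ) + 2 * s) / 2 with hγ
  set F : ℂ → ℂ := fun τ => ∫ ξ, u ξ • (complexLineNormSq (x - ξ) e τ + (y ^ 2 : ℝ)) ^ (γ : ℂ)
  have h_real (τ : ℝ) : csExtension s u (x + τ • e) y = y ^ (2 * s) * (F τ).re := by
    have h_integrand (ξ : E) : u ξ • (complexLineNormSq (x - ξ) e τ + (y ^ 2 : ℝ)) ^ (γ : ℂ) =
        ((u ξ * (‖x + τ • e - ξ‖ ^ 2 + y ^ 2) ^ γ : ℝ) : ℂ) := by
      rw [complexLineNormSq_ofReal, ← Complex.ofReal_add, ← Complex.ofReal_cpow (by positivity),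
        Complex.real_smul, ← Complex.ofReal_mul, sub_add_eq_add_sub]
    simp only [F, h_integrand, integral_complex_ofReal, Complex.ofReal_re, ← integral_const_mul,
      csExtension, csKernel, ← hγ, mul_left_comm]
  intro τ _
  have h_strip : {τ : ℂ | |τ.im| * ‖e‖ < y} ∈ nhds (τ : ℂ) :=
    (isOpen_lt (by fun_prop) continuous_const).mem_nhds (by simpa using hy)
  simp only [h_real]
  exact analyticAt_const.mul ((differentiableOn_integral_smul_complexLineNormSq_cpow
    hu hc x e y γ).analyticAt h_strip).re_ofReal

theorem csExtension_eq_zero_of_isOpen (s : ℝ) (hu : Continuous u) (hc : HasCompactSupport u)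
    {y : ℝ} (hy : 0 < y) {U : Set E} (hU : IsOpen U) (hU' : U.Nonempty)
    (hzero : ∀ x ∈ U, csExtension s u x y = 0) (x : E) : csExtension s u x y = 0 := by
  obtain ⟨p, hp⟩ := hU'
  have h_near : (fun τ : ℝ => csExtension s u (p + τ • (x - p)) y) =ᶠ[𝓝 0] 0 := by
    have h_line : Continuous fun τ : ℝ => p + τ • (x - p) := by fun_prop
    filter_upwards [(hU.preimage h_line).mem_nhds (by simpa using hp)] with τ hτ using hzero _ hτ
  have h_line := analyticOnNhd_csExtension_line s hu hc p (x - p) hy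
  simpa using h_line.eqOn_zero_of_preconnected_of_eventuallyEq_zero isPreconnected_univ
    (Set.mem_univ 0) h_near (Set.mem_univ 1)

theorem exists_deriv_csExtension_ne_zero [Nontrivial E] (hs : 0 < s) (hu : Continuous u)
    (hc : HasCompactSupport u) (hne : u ≠ 0) {U : Set E} (hU : IsOpen U) (hU' : U.Nonempty) :
    ∃ x ∈ U, ∃ y > 0, deriv (fun t => csExtension s u x t) y ≠ 0 := by
  by_contra! h_deriv
  have h_const : ∀ x ∈ U, ∀ y > 0, csExtension s u x y = 0 := fun x hx y hy => by
    refine tendsto_nhds_unique (tendsto_const_nhds.congr' ?_)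
      (tendsto_csExtension_atTop hs.le (hu.integrable_of_hasCompactSupport hc) x)
    filter_upwards [eventually_gt_atTop 0] with t ht
    exact isOpen_Ioi.is_const_of_deriv_eq_zero isPreconnected_Ioi
      (fun r hr => (hasDerivAt_csExtension s hu hc x hr).differentiableAt.differentiableWithinAt)
      (h_deriv x hx) hy ht
  obtain ⟨M, hM⟩ := hc.exists_bound_of_continuous hu
  refine hne (funext fun x => ?_)
  have h_trace : u x * ∫ η : E, csKernel s 1 η = 0 := by
    refine tendsto_nhds_unique (tendsto_csExtension_nhdsGT_zero hs hu hM x)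
      (tendsto_const_nhds.congr' ?_)
    filter_upwards [self_mem_nhdsWithin] with y hy
    exact (csExtension_eq_zero_of_isOpen s hu hc hy hU hU' (fun p hp => h_const p hp y hy) x).symm
  exact (mul_eq_zero.1 h_trace).resolve_right (integral_csKernel_one_pos volume hs).ne'

theorem csEnergy_csExtension_pos_of_isOpen [Nontrivial E] (hs : 0 < s) (hu : Continuous u)
    (hc : HasCompactSupport u) (hne : u ≠ 0) {U : Set E} (hU : IsOpen U) (hU' : U.Nonempty) :
    0 < csEnergy s (csExtension s u) U := by
  obtain ⟨x, hx, y, hy, h_ne⟩ := exists_deriv_csExtension_ne_zero hs hu hc hne hU hU'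
  set g : ℝ × E → ℝ := fun p =>
    p.1 ^ (1 - 2 * s) * deriv (fun t => csExtension s u p.2 t) p.1 ^ 2
  have h_cont : ContinuousAt g (y, x) := by
    have h_deriv := (continuousOn_deriv_csExtension s hu hc).continuousAt
      ((isOpen_Ioi.prod isOpen_univ).mem_nhds
        (show (y, x) ∈ Set.Ioi 0 ×ˢ Set.univ from ⟨hy, trivial⟩))
    exact (continuousAt_fst.rpow_const (Or.inl (ne_of_gt hy))).mul (h_deriv.pow 2)
  have h_pos : 0 < g (y, x) := mul_pos (rpow_pos_of_pos hy _) (sq_pos_iff.2 h_ne)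
  refine (lintegral_lintegral_pos_of_continuousAt (μ := volume) (ν := volume) hU isOpen_Ioi
    (p := (y, x)) ⟨hy, hx⟩ (ENNReal.continuous_ofReal.continuousAt.comp h_cont)
    (ENNReal.ofReal_pos.2 h_pos)).trans_le ?_
  refine setLIntegral_mono' measurableSet_Ioi fun t ht => lintegral_mono fun z => ?_
  refine ENNReal.ofReal_le_ofReal (mul_le_mul_of_nonneg_left ?_ (rpow_nonneg (le_of_lt ht) _))
  exact le_add_of_nonneg_left (sq_nonneg _)

theorem csExtension_euclideanSpace {n : ℕ} (s : ℝ) (u : EuclideanSpace ℝ (Fin n) → ℝ)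
    (x : EuclideanSpace ℝ (Fin n)) (y : ℝ) :
    csExtension s u x y =
      ∫ ξ, y ^ (2 * s) * u ξ * (‖x - ξ‖ ^ 2 + y ^ 2) ^ (-((n : ℝ) + 2 * s) / 2) := by
  simp only [csExtension, csKernel, finrank_euclideanSpace_fin, mul_left_comm, mul_assoc]

theorem stmt16_general [Nontrivial E] (hs : 0 < s) {a : ℝ≥0} (ha : s < a)
    (hu : HolderWith C a u) (hc : HasCompactSupport u) (hne : u ≠ 0) {Ω : Set E}
    (hΩ : volume Ω ≠ ∞) (hΩc : (interior Ωᶜ).Nonempty) :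
    0 < csEnergy s (csExtension s u) Ωᶜ ∧
      csEnergy s (csExtension s u) Ω < csEnergy s (csExtension s u) Set.univ := by
  have hcont := hu.continuous (NNReal.coe_pos.1 (hs.trans ha))
  have h_pos := csEnergy_csExtension_pos_of_isOpen hs hcont hc hne isOpen_interior hΩc
  have h_finite := csEnergy_csExtension_lt_top hs ha hu hc hΩ
  have h_disjoint : Disjoint Ω (interior Ωᶜ) := disjoint_compl_right.mono_right interior_subset
  refine ⟨h_pos.trans_le (csEnergy_mono s _ interior_subset), ?_⟩
  calc csEnergy s (csExtension s u) Ω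
      < csEnergy s (csExtension s u) Ω + csEnergy s (csExtension s u) (interior Ωᶜ) :=
        ENNReal.lt_add_right h_finite.ne h_pos.ne'
    _ ≤ csEnergy s (csExtension s u) (Ω ∪ interior Ωᶜ) :=
        csEnergy_add_le_csEnergy_union s _ isOpen_interior.measurableSet h_disjoint
    _ ≤ csEnergy s (csExtension s u) Set.univ := csEnergy_mono s _ (Set.subset_univ _)

end Extension

/-- For a bounded open `Ω` and a smooth compactly supported `u ≢ 0` with support in `Ω`,
the weighted energy of the Caffarelli–Silvestre extension `w_u` over
`(ℝⁿ∖Ω) × (0,∞)` is strictly positive; consequently its energy over the half-cylinder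
`Ω × (0,∞)` is strictly smaller than its energy over the whole half-space. Here
`|∇w|² = ‖∇ₓw‖² + (∂_y w)²` is the square of the full gradient in `(x,y)`. -/
theorem stmt16 {n : ℕ} (hn : 1 ≤ n) (s : ℝ) (hs : s ∈ Set.Ioo (0 : ℝ) 1)
    (Ω : Set (EuclideanSpace ℝ (Fin n))) (hΩopen : IsOpen Ω)
    (hΩbdd : Bornology.IsBounded Ω)
    (u : EuclideanSpace ℝ (Fin n) → ℝ) (hsmooth : ContDiff ℝ (⊤ : ℕ∞) u)
    (hsupp : HasCompactSupport u) (hsuppΩ : tsupport u ⊆ Ω) (hne : u ≠ 0)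
    (w : EuclideanSpace ℝ (Fin n) → ℝ → ℝ)
    (hw : ∀ (x : EuclideanSpace ℝ (Fin n)) (y : ℝ),
      w x y = ∫ ξ : EuclideanSpace ℝ (Fin n),
        y ^ (2 * s) * u ξ * (‖x - ξ‖ ^ 2 + y ^ 2) ^ (-((n : ℝ) + 2 * s) / 2)) :
    (0 < ∫⁻ y in Set.Ioi (0 : ℝ), ∫⁻ x in (Ωᶜ : Set (EuclideanSpace ℝ (Fin n))),
        ENNReal.ofReal (y ^ (1 - 2 * s) *
          (‖fderiv ℝ (fun x' => w x' y) x‖ ^ 2 + (deriv (fun t => w x t) y) ^ 2))) ∧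
    (∫⁻ y in Set.Ioi (0 : ℝ), ∫⁻ x in Ω,
        ENNReal.ofReal (y ^ (1 - 2 * s) *
          (‖fderiv ℝ (fun x' => w x' y) x‖ ^ 2 + (deriv (fun t => w x t) y) ^ 2)))
      <
    ∫⁻ y in Set.Ioi (0 : ℝ), ∫⁻ x : EuclideanSpace ℝ (Fin n),
        ENNReal.ofReal (y ^ (1 - 2 * s) *
          (‖fderiv ℝ (fun x' => w x' y) x‖ ^ 2 + (deriv (fun t => w x t) y) ^ 2)) := by
  have : Nonempty (Fin n) := ⟨⟨0, hn⟩⟩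
  obtain ⟨C, hC⟩ := hsmooth.lipschitzWith_of_hasCompactSupport hsupp (by simp)
  obtain rfl : w = csExtension s u :=
    funext₂ fun x y => (hw x y).trans (csExtension_euclideanSpace s u x y).symm
  simpa only [csEnergy, csEnergyDensity, Measure.restrict_univ] using
    stmt16_general hs.1 (by simpa using hs.2) (holderWith_one.2 hC) hsupp hne
      hΩbdd.measure_lt_top.ne (nonempty_interior_compl_of_isBounded hΩbdd)
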